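/- arXiv:1907.02115 — 6 statements merged into one kernel-verified Lean document; each statement's English description precedes it below -/
import Mathlib

section
/- The dimension of S_c as a real vector space equals 2n − 1. -/
/-- The subspace `S_c` of matrices of the form `x_{ij} = (w_i + w̃_j)/c_{ij}`. -/
def Sc (n : ℕ) (c : Fin n → Fin n → ℝ) : Set (Fin n → Fin n → ℝ) :=
  {x | ∃ w wt : Fin n → ℝ, ∀ i j, x i j = (w i + wt j) / c i j}

/-- the dimension of `S_c` as a real vector space equals `2n − 1`. -/
theorem stmt4 {n : ℕ} (hn : 1 ≤ n) (c : Fin n → Fin n → ℝ) (hc : ∀ i j, 0 < c i j)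
    (S : Submodule ℝ (Fin n → Fin n → ℝ)) (hS : (S : Set (Fin n → Fin n → ℝ)) = Sc n c) :
    Module.finrank ℝ S = 2 * n - 1 := by
  have z : Fin n := ⟨0, hn⟩
  let f : ((Fin n → ℝ) × (Fin n → ℝ)) →ₗ[ℝ] (Fin n → Fin n → ℝ) :=
    { toFun := fun p i j => (p.1 i + p.2 j) / c i j
      map_add' := by
        intro p q
        funext i j
        simp only [Prod.fst_add, Prod.snd_add, Pi.add_apply]
        ring
      map_smul' := by
        intro r p
        funext i j
        simp only [Prod.smul_fst, Prod.smul_snd, Pi.smul_apply, smul_eq_mul, RingHom.id_apply]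
        ring }
  have hf : ∀ p i j, f p i j = (p.1 i + p.2 j) / c i j := fun _ _ _ => rfl
  have hr : LinearMap.range f = S := by
    apply SetLike.coe_injective
    rw [hS]
    ext x
    constructor
    · rintro ⟨p, rfl⟩
      exact ⟨p.1, p.2, fun i j => rfl⟩
    · rintro ⟨w, wt, h⟩
      refine ⟨(w, wt), ?_⟩
      funext i j
      rw [h i j, hf]
  let v : (Fin n → ℝ) × (Fin n → ℝ) := (fun _ => 1, fun _ => -1)
  have hv : v ≠ 0 := by
    intro h
    have := congrFun (congrArg Prod.fst h) z
    simp [v] at this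
  have hk : LinearMap.ker f = Submodule.span ℝ {v} := by
    ext p
    rw [LinearMap.mem_ker, Submodule.mem_span_singleton]
    constructor
    · intro h
      have h0 : ∀ i j, p.1 i + p.2 j = 0 := by
        intro i j
        have h1 : f p i j = 0 := by rw [h]; rfl
        rw [hf, div_eq_zero_iff] at h1
        exact h1.resolve_right (hc i j).ne'
      refine ⟨p.1 z, ?_⟩
      refine Prod.ext ?_ ?_
      · funext i
        simp only [v, Prod.smul_fst, Pi.smul_apply, smul_eq_mul]
        linarith [h0 i z, h0 z z]
      · funext j
        simp only [v, Prod.smul_snd, Pi.smul_apply, smul_eq_mul]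
        linarith [h0 z j]
    · rintro ⟨a, rfl⟩
      funext i j
      rw [hf]
      simp [v]
  have h := LinearMap.finrank_range_add_finrank_ker f
  rw [hr, hk, finrank_span_singleton hv, Module.finrank_prod, Module.finrank_fin_fun] at h
  omega
end

section
/- If v is a real n×n matrix with ⟨v, s⟩_c = 0 for every s ∈ S_c, then v lies in the linear span of {B_{ij} : i,j ∈ [n−1]}; thus the matrices B_{ij} form a basis of the c-orthogonal complement of S_c. -/
/-- The weighted inner product `⟨x,y⟩_c = Σ_{i,j} c_{ij} x_{ij} y_{ij}`. -/
def cinner {n : ℕ} (c x y : Fin n → Fin n → ℝ) : ℝ :=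
  ∑ i, ∑ j, c i j * x i j * y i j

/-- `B_{ij}`: the `n×n` matrix with entry `1` at positions `(i,j)` and `(n,n)`,
entry `−1` at positions `(i,n)` and `(n,j)`, `0` elsewhere. -/
def Bmat (n : ℕ) (i j : Fin (n - 1)) : Fin n → Fin n → ℝ :=
  fun k l =>
    (if k.val = i.val ∧ l.val = j.val then 1 else 0)
      + (if k.val = n - 1 ∧ l.val = n - 1 then 1 else 0)
      - (if k.val = i.val ∧ l.val = n - 1 then 1 else 0)
      - (if k.val = n - 1 ∧ l.val = j.val then 1 else 0)

theorem aux_Bmat (m : ℕ) (i j : Fin m) (k l : Fin (m + 1)) :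
    Bmat (m + 1) i j k l =
      ((if k = i.castSucc then 1 else 0) - (if k = Fin.last m then 1 else 0)) *
      ((if l = j.castSucc then 1 else 0) - (if l = Fin.last m then 1 else 0)) := by
  have e1 : (k = i.castSucc) ↔ k.val = i.val := by simp [Fin.ext_iff]
  have e2 : (k = Fin.last m) ↔ k.val = m := by simp [Fin.ext_iff]
  have e3 : (l = j.castSucc) ↔ l.val = j.val := by simp [Fin.ext_iff]
  have e4 : (l = Fin.last m) ↔ l.val = m := by simp [Fin.ext_iff]
  have e5 : m + 1 - 1 = m := rfl
  simp only [Bmat, e1, e2, e3, e4, e5, ite_and]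
  split_ifs <;> norm_num

theorem aux_cinner {n : ℕ} (c : Fin n → Fin n → ℝ) (hc : ∀ i j, 0 < c i j)
    (v : Fin n → Fin n → ℝ) (w wt : Fin n → ℝ) :
    cinner c v (fun i j => (w i + wt j) / c i j) = ∑ i, ∑ j, v i j * (w i + wt j) := by
  unfold cinner
  refine Finset.sum_congr rfl fun i _ => Finset.sum_congr rfl fun j _ => ?_
  have := (hc i j).ne'
  field_simp

theorem aux_mem (m : ℕ) (v : Fin (m + 1) → Fin (m + 1) → ℝ)
    (hr : ∀ i, ∑ j, v i j = 0) (hs : ∀ j, ∑ i, v i j = 0) :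
    v = ∑ i : Fin m, ∑ j : Fin m, v i.castSucc j.castSucc • Bmat (m + 1) i j := by
  have hr' : ∀ i, ∑ j : Fin m, v i j.castSucc = - v i (Fin.last m) := by
    intro i
    have := hr i
    rw [Fin.sum_univ_castSucc] at this
    linarith
  have hs' : ∀ j, ∑ i : Fin m, v i.castSucc j = - v (Fin.last m) j := by
    intro j
    have := hs j
    rw [Fin.sum_univ_castSucc] at this
    linarith
  funext k l
  simp only [Finset.sum_apply, Pi.smul_apply, smul_eq_mul, aux_Bmat]
  refine Fin.lastCases ?_ (fun k => ?_) k <;> refine Fin.lastCases ?_ (fun l => ?_) l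
  · have h : ∀ i : Fin m, Fin.last m ≠ i.castSucc := fun i => (Fin.castSucc_lt_last i).ne'
    simp [h, hr', hs']
  · have h : ∀ i : Fin m, Fin.last m ≠ i.castSucc := fun i => (Fin.castSucc_lt_last i).ne'
    have h' : ∀ i : Fin m, i.castSucc ≠ Fin.last m := fun i => (Fin.castSucc_lt_last i).ne
    simp [h, h', hs']
  · have h : ∀ i : Fin m, Fin.last m ≠ i.castSucc := fun i => (Fin.castSucc_lt_last i).ne'
    have h' : ∀ i : Fin m, i.castSucc ≠ Fin.last m := fun i => (Fin.castSucc_lt_last i).ne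
    simp [h, h', hr']
  · have h' : ∀ i : Fin m, i.castSucc ≠ Fin.last m := fun i => (Fin.castSucc_lt_last i).ne
    simp [h']

theorem aux_orth (m : ℕ) (i j : Fin m) (w wt : Fin (m + 1) → ℝ) :
    ∑ k, ∑ l, Bmat (m + 1) i j k l * (w k + wt l) = 0 := by
  have z : ∀ i : Fin m, ∑ k : Fin (m + 1),
      (((if k = i.castSucc then 1 else 0) - (if k = Fin.last m then 1 else 0) : ℝ)) = 0 := by
    intro i
    simp [Finset.sum_sub_distrib]
  simp only [aux_Bmat, mul_add, Finset.sum_add_distrib]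
  have a : ∀ a b d : ℝ, a * b * d = (a * d) * b := fun a b d => by ring
  conv_lhs => enter [2]; simp only [mul_assoc]
  conv_lhs => enter [1]; simp only [a]
  simp only [← Finset.mul_sum, ← Finset.sum_mul, z, mul_zero, zero_mul, Finset.sum_const_zero,
    add_zero]

/-- every matrix `v` that is `c`-orthogonal to all of `S_c` lies in the span of
the `B_{ij}`; thus the `B_{ij}` span (and, being linearly independent, form a basis of) the
`c`-orthogonal complement of `S_c`. -/
theorem stmt7 {n : ℕ} (hn : 2 ≤ n) (c : Fin n → Fin n → ℝ) (hc : ∀ i j, 0 < c i j) :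
    (∀ v : Fin n → Fin n → ℝ, (∀ s ∈ Sc n c, cinner c v s = 0) →
      v ∈ Submodule.span ℝ (Set.range fun p : Fin (n - 1) × Fin (n - 1) => Bmat n p.1 p.2)) ∧
    (Submodule.span ℝ (Set.range fun p : Fin (n - 1) × Fin (n - 1) => Bmat n p.1 p.2) :
        Set (Fin n → Fin n → ℝ)) = {v | ∀ s ∈ Sc n c, cinner c v s = 0} := by
  obtain ⟨m, rfl⟩ : ∃ m, n = m + 1 := ⟨n - 1, by omega⟩
  have key : ∀ v : Fin (m + 1) → Fin (m + 1) → ℝ, (∀ s ∈ Sc (m + 1) c, cinner c v s = 0) →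
      v ∈ Submodule.span ℝ
        (Set.range fun p : Fin (m + 1 - 1) × Fin (m + 1 - 1) => Bmat (m + 1) p.1 p.2) := by
    intro v hv
    have h : ∀ w wt : Fin (m + 1) → ℝ, ∑ i, ∑ j, v i j * (w i + wt j) = 0 := by
      intro w wt
      rw [← aux_cinner c hc]
      exact hv _ ⟨w, wt, fun _ _ => rfl⟩
    rw [aux_mem m v ?_ ?_]
    · exact Submodule.sum_mem _ fun i _ => Submodule.sum_mem _ fun j _ =>
        Submodule.smul_mem _ _ (Submodule.subset_span ⟨(i, j), rfl⟩)
    · intro i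
      have := h (fun k => if k = i then 1 else 0) 0
      simpa [← Finset.sum_mul] using this
    · intro j
      have := h 0 (fun k => if k = j then 1 else 0)
      simpa using this
  refine ⟨key, Set.Subset.antisymm ?_ key⟩
  rintro v hv s ⟨w, wt, hs⟩
  obtain rfl : s = fun i j => (w i + wt j) / c i j := by
    funext i j
    exact hs i j
  rw [aux_cinner c hc]
  induction hv using Submodule.span_induction with
  | mem x hx =>
    obtain ⟨p, rfl⟩ := hx
    exact aux_orth m p.1 p.2 w wt
  | zero => simp
  | add x y _ _ hx hy =>
    simp only [Pi.add_apply, add_mul, Finset.sum_add_distrib, hx, hy, add_zero]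
  | smul a x _ hx =>
    simp only [Pi.smul_apply, smul_eq_mul, mul_assoc, ← Finset.mul_sum, hx, mul_zero]
end

section
/- For every choice of x_1,…,x_{n−1}, y_1,…,y_{n−1}, z ∈ ℝ, the matrix v satisfies ⟨v, B_{11}⟩_c = c_{11} and ⟨v, B_{kl}⟩_c = 0 for all (k,l) ∈ [n−1]×[n−1] with (k,l) ≠ (1,1); equivalently, e_{11} − v is c-orthogonal to B_{kl} for every k,l ∈ [n−1], where e_{11} is the matrix with entry 1 at position (1,1) and 0 elsewhere. -/
/-- The candidate projection-error matrix `v = (e_{11})_{⊥S_c}` built from the parameters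
`x_1,…,x_{n−1}, y_1,…,y_{n−1}, z`:
`v_{kl} = (−z − x_k − y_l)/c_{kl}` for `k,l ∈ [n−1]` (with an extra `+1` at `(1,1)`),
`v_{kn} = −x_k/c_{kn}`, `v_{nl} = −y_l/c_{nl}`, `v_{nn} = z/c_{nn}`. -/
noncomputable def Vmat (n : ℕ) (c : Fin n → Fin n → ℝ) (x y : Fin (n - 1) → ℝ) (z : ℝ) :
    Fin n → Fin n → ℝ :=
  fun k l =>
    if hk : k.val < n - 1 then
      if hl : l.val < n - 1 then
        (if k.val = 0 ∧ l.val = 0 then 1 else 0) + (-z - x ⟨k.val, hk⟩ - y ⟨l.val, hl⟩) / c k l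
      else -x ⟨k.val, hk⟩ / c k l
    else
      if hl : l.val < n - 1 then -y ⟨l.val, hl⟩ / c k l
      else z / c k l

theorem point_sum {n : ℕ} (f : Fin n → Fin n → ℝ) (a b : ℕ) (ha : a < n) (hb : b < n) :
    ∑ i : Fin n, ∑ j : Fin n, f i j * (if i.val = a ∧ j.val = b then (1 : ℝ) else 0)
      = f ⟨a, ha⟩ ⟨b, hb⟩ := by
  rw [Finset.sum_eq_single ⟨a, ha⟩, Finset.sum_eq_single ⟨b, hb⟩]
  · simp
  · intro j _ hj
    have : j.val ≠ b := fun h => hj (Fin.ext h)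
    simp [this]
  · simp
  · intro i _ hi
    have : i.val ≠ a := fun h => hi (Fin.ext h)
    simp [this]
  · simp

theorem cinner_Bmat {n : ℕ} (c w : Fin n → Fin n → ℝ) (k l : Fin (n - 1))
    (hk : k.val < n) (hl : l.val < n) (hN : n - 1 < n) :
    cinner c w (Bmat n k l) =
      c ⟨k, hk⟩ ⟨l, hl⟩ * w ⟨k, hk⟩ ⟨l, hl⟩ + c ⟨n - 1, hN⟩ ⟨n - 1, hN⟩ * w ⟨n - 1, hN⟩ ⟨n - 1, hN⟩
      - c ⟨k, hk⟩ ⟨n - 1, hN⟩ * w ⟨k, hk⟩ ⟨n - 1, hN⟩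
      - c ⟨n - 1, hN⟩ ⟨l, hl⟩ * w ⟨n - 1, hN⟩ ⟨l, hl⟩ := by
  unfold cinner Bmat
  simp only [mul_add, mul_sub, Finset.sum_add_distrib, Finset.sum_sub_distrib]
  rw [point_sum (fun i j => c i j * w i j) _ _ hk hl,
    point_sum (fun i j => c i j * w i j) _ _ hN hN,
    point_sum (fun i j => c i j * w i j) _ _ hk hN,
    point_sum (fun i j => c i j * w i j) _ _ hN hl]

theorem cinner_V {n : ℕ} (c : Fin n → Fin n → ℝ) (hc : ∀ i j, 0 < c i j)
    (x y : Fin (n - 1) → ℝ) (z : ℝ) (k l : Fin (n - 1)) (hk : k.val < n) (hl : l.val < n) :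
    cinner c (Vmat n c x y z) (Bmat n k l) =
      c ⟨k, hk⟩ ⟨l, hl⟩ * (if k.val = 0 ∧ l.val = 0 then 1 else 0) := by
  have hN : n - 1 < n := by omega
  rw [cinner_Bmat c _ k l hk hl hN]
  have h1 := (hc ⟨k, hk⟩ ⟨l, hl⟩).ne'
  have h2 := (hc ⟨n - 1, hN⟩ ⟨n - 1, hN⟩).ne'
  have h3 := (hc ⟨k, hk⟩ ⟨n - 1, hN⟩).ne'
  have h4 := (hc ⟨n - 1, hN⟩ ⟨l, hl⟩).ne'
  simp only [Vmat, k.isLt, l.isLt, lt_irrefl, dif_pos, dif_neg, not_false_eq_true, Fin.eta]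
  rw [mul_add, mul_div_cancel₀ _ h1, mul_div_cancel₀ _ h2, mul_div_cancel₀ _ h3,
    mul_div_cancel₀ _ h4]
  ring

/-- for every choice of the parameters, `⟨v, B_{11}⟩_c = c_{11}` and
`⟨v, B_{kl}⟩_c = 0` for `(k,l) ≠ (1,1)`; equivalently, `e_{11} − v` is `c`-orthogonal to
every `B_{kl}`, where `e_{11}` has entry `1` at `(1,1)` and `0` elsewhere. -/
theorem stmt8 {n : ℕ} (hn : 2 ≤ n) (c : Fin n → Fin n → ℝ) (hc : ∀ i j, 0 < c i j)
    (x y : Fin (n - 1) → ℝ) (z : ℝ) :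
    cinner c (Vmat n c x y z) (Bmat n ⟨0, by omega⟩ ⟨0, by omega⟩)
        = c ⟨0, by omega⟩ ⟨0, by omega⟩ ∧
    (∀ k l : Fin (n - 1), (k.val ≠ 0 ∨ l.val ≠ 0) →
      cinner c (Vmat n c x y z) (Bmat n k l) = 0) ∧
    (∀ k l : Fin (n - 1),
      cinner c ((fun i j : Fin n => if i.val = 0 ∧ j.val = 0 then (1 : ℝ) else 0)
          - Vmat n c x y z) (Bmat n k l) = 0) := by
  refine ⟨?_, ?_, ?_⟩
  · rw [cinner_V c hc x y z _ _ (by simp; omega) (by simp; omega)]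
    simp
  · intro k l h
    rw [cinner_V c hc x y z k l (by omega) (by omega), if_neg (by omega), mul_zero]
  · intro k l
    have hk : k.val < n := by omega
    have hl : l.val < n := by omega
    have hN : n - 1 < n := by omega
    have hN0 : n - 1 ≠ 0 := by omega
    have hV := cinner_V c hc x y z k l hk hl
    rw [cinner_Bmat c _ k l hk hl hN] at hV ⊢
    simp only [Pi.sub_apply, hN0, false_and, and_false, if_false]
    linarith
end

section
/- Suppose that ⟨v, e_c^(i)⟩_c = 0 for all i ∈ [n] and ⟨v, ẽ_c^(j)⟩_c = 0 for all j ∈ [n−1]. Then ⟨v, s⟩_c = 0 for every s ∈ S_c, the matrix e_{11} − v belongs to S_c (so e_{11} − v is the c-orthogonal projection of e_{11} onto S_c and v is the projection error), and the squared c-norm of the projection satisfies ⟨e_{11} − v, e_{11} − v⟩_c = z + x_1 + y_1. -/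
/-- `e_c^(i)`: the matrix whose `(i,j)` entry is `1/c_{ij}` for every `j`, `0` elsewhere. -/
noncomputable def ec {n : ℕ} (c : Fin n → Fin n → ℝ) (i : Fin n) : Fin n → Fin n → ℝ :=
  fun i' j => if i' = i then 1 / c i' j else 0

/-- `ẽ_c^(j)`: the matrix whose `(i,j)` entry is `1/c_{ij}` for every `i`, `0` elsewhere. -/
noncomputable def ect {n : ℕ} (c : Fin n → Fin n → ℝ) (j : Fin n) : Fin n → Fin n → ℝ :=
  fun i j' => if j' = j then 1 / c i j' else 0

/-- if `v` is `c`-orthogonal to all `e_c^(i)`, `i ∈ [n]`, and all `ẽ_c^(j)`,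
`j ∈ [n−1]`, then `v` is `c`-orthogonal to all of `S_c`, `e_{11} − v ∈ S_c` (so `e_{11} − v`
is the `c`-orthogonal projection of `e_{11}` onto `S_c` and `v` is the projection error), and
`⟨e_{11} − v, e_{11} − v⟩_c = z + x_1 + y_1`. -/
theorem stmt9 {n : ℕ} (hn : 2 ≤ n) (c : Fin n → Fin n → ℝ) (hc : ∀ i j, 0 < c i j)
    (x y : Fin (n - 1) → ℝ) (z : ℝ)
    (h1 : ∀ i : Fin n, cinner c (Vmat n c x y z) (ec c i) = 0)
    (h2 : ∀ j : Fin (n - 1),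
      cinner c (Vmat n c x y z) (ect c (Fin.castLE (Nat.sub_le n 1) j)) = 0) :
    (∀ s ∈ Sc n c, cinner c (Vmat n c x y z) s = 0) ∧
    ((fun i j : Fin n => if i.val = 0 ∧ j.val = 0 then (1 : ℝ) else 0) - Vmat n c x y z)
      ∈ Sc n c ∧
    cinner c
      ((fun i j : Fin n => if i.val = 0 ∧ j.val = 0 then (1 : ℝ) else 0) - Vmat n c x y z)
      ((fun i j : Fin n => if i.val = 0 ∧ j.val = 0 then (1 : ℝ) else 0) - Vmat n c x y z)
      = z + x ⟨0, by omega⟩ + y ⟨0, by omega⟩ := by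
  have hv : ∀ i j, c i j ≠ 0 := fun i j => (hc i j).ne'
  have hP : ((fun i j : Fin n => if i.val = 0 ∧ j.val = 0 then (1 : ℝ) else 0) - Vmat n c x y z)
      ∈ Sc n c := by
    refine ⟨fun k => if hk : k.val < n - 1 then x ⟨k.val, hk⟩ + z else 0,
      fun l => if hl : l.val < n - 1 then y ⟨l.val, hl⟩ else -z, fun i j => ?_⟩
    simp only [Pi.sub_apply, Vmat]
    by_cases hi : i.val < n - 1 <;> by_cases hj : j.val < n - 1
    · simp only [hi, hj, dite_true]
      ring
    · have : ¬ (i.val = 0 ∧ j.val = 0) := by omega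
      simp only [hi, hj, this, dite_true, dite_false, if_false]
      ring
    · have : ¬ (i.val = 0 ∧ j.val = 0) := by omega
      simp only [hi, hj, this, dite_true, dite_false, if_false]
      ring
    · have : ¬ (i.val = 0 ∧ j.val = 0) := by omega
      simp only [hi, hj, this, dite_false, if_false]
      ring
  have hp0 : (1 : ℝ) - Vmat n c x y z ⟨0, by omega⟩ ⟨0, by omega⟩
      = (z + x ⟨0, by omega⟩ + y ⟨0, by omega⟩) / c ⟨0, by omega⟩ ⟨0, by omega⟩ := by
    have h0 : 0 < n - 1 := by omega
    simp only [Vmat, h0, dite_true, and_self, if_true]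
    ring
  generalize Vmat n c x y z = v at *
  have r : ∀ i, ∑ j, v i j = 0 := by
    intro i
    have h := h1 i
    unfold cinner ec at h
    rw [Finset.sum_eq_single i] at h
    rw [← h]
    · refine Finset.sum_congr rfl fun j _ => ?_
      have := hv i j
      rw [if_pos rfl]
      field_simp
    · intro b _ hb
      simp [hb]
    · simp
  have q : ∀ j : Fin n, j.val < n - 1 → ∑ i, v i j = 0 := by
    intro j hj
    have := h2 ⟨j.val, hj⟩
    have e : Fin.castLE (Nat.sub_le n 1) ⟨j.val, hj⟩ = j := by ext; rfl
    rw [e] at this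
    rw [← this]
    unfold cinner ect
    refine Finset.sum_congr rfl fun i _ => ?_
    rw [Finset.sum_eq_single j]
    · have := hv i j
      rw [if_pos rfl]
      field_simp
    · intro b _ hb
      simp [hb]
    · simp
  have q' : ∀ j : Fin n, ∑ i, v i j = 0 := by
    intro j
    by_cases hj : j.val < n - 1
    · exact q j hj
    · have t : ∑ j, ∑ i, v i j = 0 := by
        rw [Finset.sum_comm]
        exact Finset.sum_eq_zero fun i _ => r i
      rw [Finset.sum_eq_single j] at t
      · exact t
      · intro b _ hb
        apply q
        have : b.val ≠ j.val := fun h => hb (Fin.ext h)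
        omega
      · simp
  have hO : ∀ s ∈ Sc n c, cinner c v s = 0 := by
    rintro s ⟨w, wt, hs⟩
    have : cinner c v s = ∑ i, ∑ j, (v i j * w i) + ∑ i, ∑ j, (v i j * wt j) := by
      unfold cinner
      rw [← Finset.sum_add_distrib]
      refine Finset.sum_congr rfl fun i _ => ?_
      rw [← Finset.sum_add_distrib]
      refine Finset.sum_congr rfl fun j _ => ?_
      have := hv i j
      rw [hs]
      field_simp
    rw [this, Finset.sum_comm (f := fun i j => v i j * wt j)]
    simp only [← Finset.sum_mul, r, q', zero_mul, Finset.sum_const_zero, add_zero]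
  refine ⟨hO, hP, ?_⟩
  have h3 := hO _ hP
  generalize hp : ((fun i j : Fin n => if i.val = 0 ∧ j.val = 0 then (1 : ℝ) else 0) - v) = p at *
  have h4 : cinner c p p + cinner c v p
      = c ⟨0, by omega⟩ ⟨0, by omega⟩ * p ⟨0, by omega⟩ ⟨0, by omega⟩ := by
    have : cinner c p p + cinner c v p
        = ∑ i : Fin n, ∑ j : Fin n, if i.val = 0 ∧ j.val = 0 then c i j * p i j else 0 := by
      unfold cinner
      rw [← Finset.sum_add_distrib]
      refine Finset.sum_congr rfl fun i _ => ?_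
      rw [← Finset.sum_add_distrib]
      refine Finset.sum_congr rfl fun j _ => ?_
      have e : p i j = (if i.val = 0 ∧ j.val = 0 then (1 : ℝ) else 0) - v i j := by
        rw [← hp]; rfl
      have e2 : v i j = (if i.val = 0 ∧ j.val = 0 then (1 : ℝ) else 0) - p i j := by
        rw [e]; ring
      rw [e2]
      split_ifs <;> ring
    rw [this, Finset.sum_eq_single ⟨0, by omega⟩, Finset.sum_eq_single ⟨0, by omega⟩]
    · simp
    · intro b _ hb
      have : b.val ≠ 0 := fun h => hb (Fin.ext h)
      simp [this]
    · simp
    · intro b _ hb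
      have : b.val ≠ 0 := fun h => hb (Fin.ext h)
      simp [this]
    · simp
  have e : p ⟨0, by omega⟩ ⟨0, by omega⟩ = 1 - v ⟨0, by omega⟩ ⟨0, by omega⟩ := by
    rw [← hp]; simp
  rw [h3, add_zero, e, hp0, mul_div_cancel₀ _ (hv _ _)] at h4
  exact h4
end

section
/- Let q and q' be real n×n matrices, and let p, p' ∈ K_c satisfy ⟨q − p, y − p⟩_c ≤ 0 and ⟨q' − p', y − p'⟩_c ≤ 0 for all y ∈ K_c (so p and p' are the c-metric projections of q and q' onto K_c). If q ≠ p, then ‖q' − p'‖_c − ‖q − p‖_c ≤ [ (‖q'‖_c² − ‖q‖_c²) − (‖p'‖_c² − ‖p‖_c²) ] / (2 ‖q − p‖_c). -/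
/-- The weighted norm `‖x‖_c = √⟨x,x⟩_c`. -/
noncomputable def cnorm {n : ℕ} (c x : Fin n → Fin n → ℝ) : ℝ :=
  Real.sqrt (cinner c x x)

/-- The cone `K_c` of matrices of the form `x_{ij} = (w_i + w̃_j)/c_{ij}` with `w, w̃ ≥ 0`. -/
def Kc (n : ℕ) (c : Fin n → Fin n → ℝ) : Set (Fin n → Fin n → ℝ) :=
  {x | ∃ w wt : Fin n → ℝ, (∀ i, 0 ≤ w i) ∧ (∀ j, 0 ≤ wt j) ∧
    ∀ i j, x i j = (w i + wt j) / c i j}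

theorem cinner_self_nn {n : ℕ} (c : Fin n → Fin n → ℝ) (hc : ∀ i j, 0 < c i j)
    (x : Fin n → Fin n → ℝ) : 0 ≤ cinner c x x := by
  unfold cinner
  refine Finset.sum_nonneg fun i _ => Finset.sum_nonneg fun j _ => ?_
  rw [mul_assoc]
  exact mul_nonneg (hc i j).le (mul_self_nonneg _)

theorem cinner_self_ps {n : ℕ} (c : Fin n → Fin n → ℝ) (hc : ∀ i j, 0 < c i j)
    (x : Fin n → Fin n → ℝ) (hx : x ≠ 0) : 0 < cinner c x x := by
  have hnn : ∀ i j, 0 ≤ c i j * x i j * x i j := fun i j => by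
    rw [mul_assoc]
    exact mul_nonneg (hc i j).le (mul_self_nonneg _)
  obtain ⟨i, hi⟩ := Function.ne_iff.mp hx
  obtain ⟨j, hj⟩ := Function.ne_iff.mp hi
  have hj' : x i j ≠ 0 := hj
  unfold cinner
  refine Finset.sum_pos' (fun i _ => Finset.sum_nonneg fun j _ => hnn i j)
    ⟨i, Finset.mem_univ _, Finset.sum_pos' (fun j _ => hnn i j) ⟨j, Finset.mem_univ _, ?_⟩⟩
  rw [mul_assoc]
  exact mul_pos (hc i j) (mul_self_pos.mpr hj')

theorem proj_pyth {n : ℕ} (c : Fin n → Fin n → ℝ)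
    (q p : Fin n → Fin n → ℝ) (hp : p ∈ Kc n c)
    (hvar : ∀ y ∈ Kc n c, cinner c (q - p) (y - p) ≤ 0) :
    cinner c (q - p) (q - p) = cinner c q q - cinner c p p := by
  have h0 := hvar 0 ⟨0, 0, fun _ => le_rfl, fun _ => le_rfl, fun i j => by simp⟩
  have h2 := hvar (p + p) (by
    obtain ⟨w, v, hw, hv, h⟩ := hp
    refine ⟨w + w, v + v, fun i => add_nonneg (hw i) (hw i),
      fun i => add_nonneg (hv i) (hv i), fun i j => ?_⟩
    simp only [Pi.add_apply, h]
    ring)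
  have e0 : cinner c (q - p) (0 - p) = - cinner c (q - p) p := by
    simp [cinner]
  rw [e0] at h0
  rw [add_sub_cancel_right] at h2
  have e : cinner c (q - p) (q - p) = cinner c q q - cinner c p p - 2 * cinner c (q - p) p := by
    simp only [cinner, Finset.mul_sum, ← Finset.sum_sub_distrib]
    refine Finset.sum_congr rfl fun i _ => Finset.sum_congr rfl fun j _ => ?_
    simp only [Pi.sub_apply]
    ring
  linarith

/-- if `p` and `p'` are the `c`-metric projections of `q` and `q'` onto `K_c`
(via the variational characterization) and `q ≠ p`, then
`‖q' − p'‖_c − ‖q − p‖_c ≤ [(‖q'‖_c² − ‖q‖_c²) − (‖p'‖_c² − ‖p‖_c²)] / (2‖q − p‖_c)`. -/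
theorem stmt13 {n : ℕ} (hn : 1 ≤ n) (c : Fin n → Fin n → ℝ) (hc : ∀ i j, 0 < c i j)
    (q q' p p' : Fin n → Fin n → ℝ) (hp : p ∈ Kc n c) (hp' : p' ∈ Kc n c)
    (hvar : ∀ y ∈ Kc n c, cinner c (q - p) (y - p) ≤ 0)
    (hvar' : ∀ y ∈ Kc n c, cinner c (q' - p') (y - p') ≤ 0)
    (hne : q ≠ p) :
    cnorm c (q' - p') - cnorm c (q - p)
      ≤ ((cnorm c q' ^ 2 - cnorm c q ^ 2) - (cnorm c p' ^ 2 - cnorm c p ^ 2))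
          / (2 * cnorm c (q - p)) := by
  have sq : ∀ x, cnorm c x ^ 2 = cinner c x x := fun x => Real.sq_sqrt (cinner_self_nn c hc x)
  have h1 := proj_pyth c q p hp hvar
  have h2 := proj_pyth c q' p' hp' hvar'
  have ha : 0 < cnorm c (q - p) :=
    Real.sqrt_pos.mpr (cinner_self_ps c hc _ (sub_ne_zero.mpr hne))
  rw [le_div_iff₀ (by positivity)]
  have s1 := sq (q - p)
  have s2 := sq (q' - p')
  rw [sq, sq, sq, sq]
  nlinarith [sq_nonneg (cnorm c (q' - p') - cnorm c (q - p))]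
end

section
/- Let ν be a real n×n matrix with ν_{ij} > 0 for all i,j whose row sums and column sums all equal 1, and set ν^c_min := min_{i,j} ν_{ij}/c_{ij}. Let q be a nonzero real n×n matrix with ⟨q, y⟩_c ≤ 0 for all y ∈ K_c, and define r := ν + (ν^c_min/‖q‖_c)·q. Then Σ_j r_{ij} ≤ 1 for every i ∈ [n], Σ_i r_{ij} ≤ 1 for every j ∈ [n], and r_{ij} ≥ ν_{ij} − ν^c_min/√(c_{ij}) for all i,j. -/
/-- for a positive doubly stochastic `ν`, `ν^c_min := min_{i,j} ν_{ij}/c_{ij}`,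
and a nonzero `q` with `⟨q, y⟩_c ≤ 0` for all `y ∈ K_c`, the matrix
`r := ν + (ν^c_min/‖q‖_c) q` has all row and column sums at most `1` and satisfies
`r_{ij} ≥ ν_{ij} − ν^c_min/√(c_{ij})` entrywise. -/
theorem stmt19 {n : ℕ} (hn : 1 ≤ n) (c : Fin n → Fin n → ℝ) (hc : ∀ i j, 0 < c i j)
    (ν : Fin n → Fin n → ℝ) (hν : ∀ i j, 0 < ν i j)
    (hνrow : ∀ i, ∑ j, ν i j = 1) (hνcol : ∀ j, ∑ i, ν i j = 1)
    (q : Fin n → Fin n → ℝ) (hq : q ≠ 0)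
    (hqK : ∀ y ∈ Kc n c, cinner c q y ≤ 0) :
    let νcmin : ℝ := ⨅ i, ⨅ j, ν i j / c i j
    let r : Fin n → Fin n → ℝ := ν + (νcmin / cnorm c q) • q
    (∀ i, ∑ j, r i j ≤ 1) ∧ (∀ j, ∑ i, r i j ≤ 1) ∧
    ∀ i j, ν i j - νcmin / Real.sqrt (c i j) ≤ r i j := by
  intro νcmin r
  have h0 : 0 ≤ νcmin := Real.iInf_nonneg fun i => Real.iInf_nonneg fun j =>
    (div_pos (hν i j) (hc i j)).le
  have hN : 0 ≤ cnorm c q := Real.sqrt_nonneg _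
  have ht : 0 ≤ νcmin / cnorm c q := div_nonneg h0 hN
  have key : ∀ w wt : Fin n → ℝ, (∀ i, 0 ≤ w i) → (∀ j, 0 ≤ wt j) →
      ∑ i, ∑ j, q i j * (w i + wt j) ≤ 0 := by
    intro w wt hw hwt
    have h := hqK (fun i j => (w i + wt j) / c i j) ⟨w, wt, hw, hwt, fun _ _ => rfl⟩
    unfold cinner at h
    refine le_of_eq_of_le ?_ h
    refine Finset.sum_congr rfl fun i _ => Finset.sum_congr rfl fun j _ => ?_
    have := (hc i j).ne'
    field_simp
  have hrow : ∀ i, ∑ j, q i j ≤ 0 := by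
    intro i
    have h := key (fun k => if k = i then 1 else 0) (fun _ => 0)
      (fun k => by split_ifs <;> norm_num) (fun _ => le_rfl)
    simpa [← Finset.sum_mul] using h
  have hcol : ∀ j, ∑ i, q i j ≤ 0 := by
    intro j
    have h := key (fun _ => 0) (fun k => if k = j then 1 else 0)
      (fun _ => le_rfl) (fun k => by split_ifs <;> norm_num)
    simpa using h
  refine ⟨fun i => ?_, fun j => ?_, fun i j => ?_⟩
  · simp only [r, Pi.add_apply, Pi.smul_apply, smul_eq_mul, Finset.sum_add_distrib, hνrow,
      ← Finset.mul_sum]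
    linarith [mul_nonpos_of_nonneg_of_nonpos ht (hrow i)]
  · simp only [r, Pi.add_apply, Pi.smul_apply, smul_eq_mul, Finset.sum_add_distrib, hνcol,
      ← Finset.mul_sum]
    linarith [mul_nonpos_of_nonneg_of_nonpos ht (hcol j)]
  · simp only [r, Pi.add_apply, Pi.smul_apply, smul_eq_mul]
    have hs : 0 < Real.sqrt (c i j) := Real.sqrt_pos.2 (hc i j)
    have hnn : ∀ a b, 0 ≤ c a b * q a b * q a b := fun a b => by
      rw [mul_assoc]; exact mul_nonneg (hc a b).le (mul_self_nonneg _)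
    have h1 : c i j * q i j * q i j ≤ cinner c q q :=
      (Finset.single_le_sum (f := fun b => c i b * q i b * q i b)
        (fun b _ => hnn i b) (Finset.mem_univ j)).trans
      (Finset.single_le_sum (f := fun a => ∑ b, c a b * q a b * q a b)
        (fun a _ => Finset.sum_nonneg fun b _ => hnn a b) (Finset.mem_univ i))
    have h2 : Real.sqrt (c i j) * |q i j| ≤ cnorm c q := by
      apply Real.le_sqrt_of_sq_le
      rw [mul_pow, Real.sq_sqrt (hc i j).le, sq_abs]
      linarith
    have h3 : -(q i j) * Real.sqrt (c i j) ≤ cnorm c q := by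
      nlinarith [neg_abs_le (q i j)]
    have h4 : -(νcmin / cnorm c q * q i j) ≤ νcmin / Real.sqrt (c i j) := by
      rw [le_div_iff₀ hs]
      rcases hN.eq_or_lt with h | h
      · rw [← h]; simpa using h0
      · calc -(νcmin / cnorm c q * q i j) * Real.sqrt (c i j)
            = νcmin / cnorm c q * (-(q i j) * Real.sqrt (c i j)) := by ring
          _ ≤ νcmin / cnorm c q * cnorm c q := mul_le_mul_of_nonneg_left h3 ht
          _ = νcmin := div_mul_cancel₀ _ h.ne'
    linarith
end
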